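/- Let K be an infinite field, n ≥ 1, and let σ be a regular action of the one-dimensional torus Kˣ on F_n = FreeAlgebra K (Fin n) such that for every t ∈ Kˣ and every i, the element σ(t)(z_i) − z_i has all of its homogeneous components in degrees ≥ 2 (i.e., the degree-0 and degree-1 components of σ(t)(z_i) are 0 and z_i respectively). Then σ(t) is the identity automorphism for every t ∈ Kˣ. -/

import Mathlib

open FreeAlgebra

/-- A regular action of the one-dimensional torus `Kˣ` on the free algebra:
the image of each generator depends on `t` as a Laurent polynomial. -/
def OneTorusActionIsRegular {K : Type} [Field K] {n : ℕ}
    (σ : Kˣ →* (FreeAlgebra K (Fin n) ≃ₐ[K] FreeAlgebra K (Fin n))) : Prop :=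
  ∀ i : Fin n, ∃ a : (ℤ →₀ FreeAlgebra K (Fin n)),
    ∀ t : Kˣ, σ t (ι K i) = a.sum fun m c => ((t ^ m : Kˣ) : K) • c

/-- The submodule of the free algebra consisting of the elements all of whose homogeneous
components (in the standard grading where each generator has degree 1) have degree at least 2. -/
def FreeAlgebra.higherDegree (K : Type) [Field K] (n : ℕ) :
    Submodule K (FreeAlgebra K (Fin n)) :=
  ⨆ k : {k : ℕ // 2 ≤ k},
    Submodule.span K (Set.range (ι K : Fin n → FreeAlgebra K (Fin n))) ^ (k : ℕ)

/-!
A regular orbit map `t ↦ σ(t)(z_i)` is a finite combination `∑ χ(t) a_χ` of characters `χ`. By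
Dedekind's independence of characters each `a_χ ≠ 0` is an eigenvector of every `σ(t)`, with
eigenvalue `χ(t)`. On the other hand `σ(t)` is the identity on generators modulo degree `2`, so
`σ(t) - 1` raises the degree filtration, which is separated; hence `1` is the only possible
eigenvalue, and the orbit map is constant. The exponents of a Laurent polynomial are grouped by the
characters they define, since over a finite field distinct exponents can give the same character.
-/

section CharacterSums

variable {R G M : Type*} [CommRing R] [AddCommGroup M] [Module R M]

/-- A map `f : G → M` is a character sum if it is a finite combination of multiplicative
characters `G →* R` with coefficients in `M`. It models regularity of an orbit map; Laurent
polynomial maps on `Rˣ` are the sums over the characters `t ↦ t ^ m`. -/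
def IsCharacterSum (R : Type*) {G M : Type*} [CommRing R] [MulOneClass G] [AddCommGroup M]
    [Module R M] (f : G → M) : Prop :=
  ∃ a : (G →* R) →₀ M, ∀ t, f t = a.sum fun χ c => χ t • c

theorem isCharacterSum_of_eq_sum_zpow_smul {f : Rˣ → M} (a : ℤ →₀ M)
    (ha : ∀ t, f t = a.sum fun m c => ((t ^ m : Rˣ) : R) • c) : IsCharacterSum R f := by
  refine ⟨a.mapDomain fun m => (Units.coeHom R).comp (zpowGroupHom m), fun t => ?_⟩
  rw [ha, Finsupp.sum_mapDomain_index (by simp) (by simp [smul_add])]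
  rfl

variable [IsDomain R] [Module.Projective R M]

theorem eq_zero_of_sum_character_smul_eq_zero [MulOneClass G] {S : Finset (G →* R)}
    {a : (G →* R) → M} (ha : ∀ t, ∑ χ ∈ S, χ t • a χ = 0) {χ : G →* R} (hχ : χ ∈ S) :
    a χ = 0 := by
  refine (Module.forall_dual_apply_eq_zero_iff R _).1 fun φ => ?_
  refine linearIndependent_iff'.1 (linearIndependent_monoidHom G R) S (fun ψ => φ (a ψ)) ?_ χ hχ
  ext t
  simpa [mul_comm] using congrArg φ (ha t)

variable [Monoid G] (ρ : Representation R G M) {x : M}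

-- Expand `ρ (s * t) x` in two ways and compare the coefficients of the characters of `t`.
theorem apply_coeff_eq_character_smul {a : (G →* R) →₀ M}
    (ha : ∀ t, ρ t x = a.sum fun χ c => χ t • c) (s : G) {χ : G →* R} (hχ : χ ∈ a.support) :
    ρ s (a χ) = χ s • a χ := by
  have hsum (t : G) : ∑ ψ ∈ a.support, ψ t • (ρ s (a ψ) - ψ s • a ψ) = 0 := by
    have hst : ρ (s * t) x = ρ s (ρ t x) := by rw [map_mul, Module.End.mul_apply]
    rw [ha, ha] at hst
    simp only [Finsupp.sum, map_sum, map_smul, map_mul] at hst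
    simp only [smul_sub, Finset.sum_sub_distrib, smul_smul, ← hst, mul_comm, sub_self]
  exact sub_eq_zero.1 (eq_zero_of_sum_character_smul_eq_zero hsum hχ)

theorem apply_eq_self_of_isCharacterSum (hρ : ∀ s c, Module.End.HasEigenvalue (ρ s) c → c = 1)
    (hx : IsCharacterSum R fun t => ρ t x) (t : G) : ρ t x = x := by
  obtain ⟨a, ha⟩ := hx
  have hone {χ : G →* R} (hχ : χ ∈ a.support) : χ t = 1 :=
    hρ t _ <| Module.End.hasEigenvalue_of_hasEigenvector
      ⟨Module.End.mem_eigenspace_iff.2 (apply_coeff_eq_character_smul ρ ha t hχ),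
        Finsupp.mem_support_iff.1 hχ⟩
  calc
    ρ t x = ∑ χ ∈ a.support, χ t • a χ := ha t
    _ = ∑ χ ∈ a.support, χ 1 • a χ := Finset.sum_congr rfl fun χ hχ => by rw [hone hχ, map_one]
    _ = ρ 1 x := (ha 1).symm
    _ = x := by rw [map_one, Module.End.one_apply]

end CharacterSums

section WordFiltration

variable {R X : Type*}

section CommSemiring

variable [CommSemiring R]

theorem basisFreeMonoid_apply (w : FreeMonoid X) :
    basisFreeMonoid R X w = FreeMonoid.lift (ι R) w := by
  simp [basisFreeMonoid, equivMonoidAlgebraFreeMonoid]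

theorem basisFreeMonoid_of (i : X) : basisFreeMonoid R X (FreeMonoid.of i) = ι R i := by
  rw [basisFreeMonoid_apply, FreeMonoid.lift_eval_of]

theorem basisFreeMonoid_mul (v w : FreeMonoid X) :
    basisFreeMonoid R X (v * w) = basisFreeMonoid R X v * basisFreeMonoid R X w := by
  simp only [basisFreeMonoid_apply, map_mul]

/-- The elements of the free algebra all of whose homogeneous components have degree at least `d`,
encoded as the span of the words of length at least `d`. -/
noncomputable def wordFiltration (R X : Type*) [CommSemiring R] (d : ℕ) :
    Submodule R (FreeAlgebra R X) :=
  Submodule.span R (basisFreeMonoid R X '' {w | d ≤ w.length})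

theorem mem_wordFiltration_iff {d : ℕ} {x : FreeAlgebra R X} :
    x ∈ wordFiltration R X d ↔ ∀ w, (basisFreeMonoid R X).repr x w ≠ 0 → d ≤ w.length := by
  rw [wordFiltration, Module.Basis.mem_span_image]
  simp [Set.subset_def]

theorem basisFreeMonoid_mem_wordFiltration (w : FreeMonoid X) :
    basisFreeMonoid R X w ∈ wordFiltration R X w.length :=
  Submodule.subset_span ⟨w, le_refl w.length, rfl⟩

theorem ι_mem_wordFiltration_one (i : X) : ι R i ∈ wordFiltration R X 1 := by
  simpa only [basisFreeMonoid_of, FreeMonoid.length_of] using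
    basisFreeMonoid_mem_wordFiltration (R := R) (FreeMonoid.of i)

theorem wordFiltration_antitone : Antitone (wordFiltration R X) := fun _ _ h =>
  Submodule.span_mono (Set.image_mono fun _ hw => le_trans h hw)

theorem wordFiltration_zero : wordFiltration R X 0 = ⊤ :=
  eq_top_iff.2 fun _ _ => mem_wordFiltration_iff.2 fun _ _ => Nat.zero_le _

theorem eq_zero_of_forall_mem_wordFiltration {x : FreeAlgebra R X}
    (hx : ∀ d, x ∈ wordFiltration R X d) : x = 0 := by
  refine (basisFreeMonoid R X).ext_elem fun w => ?_
  by_contra h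
  have := mem_wordFiltration_iff.1 (hx (w.length + 1)) w (by simpa using h)
  omega

theorem mem_wordFiltration_of_smul_mem [NoZeroDivisors R] {d : ℕ} {c : R} (hc : c ≠ 0)
    {x : FreeAlgebra R X} (hx : c • x ∈ wordFiltration R X d) : x ∈ wordFiltration R X d :=
  mem_wordFiltration_iff.2 fun w hw =>
    mem_wordFiltration_iff.1 hx w (by simpa using ⟨hc, hw⟩)

theorem mul_mem_wordFiltration {a b : ℕ} {x y : FreeAlgebra R X}
    (hx : x ∈ wordFiltration R X a) (hy : y ∈ wordFiltration R X b) :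
    x * y ∈ wordFiltration R X (a + b) := by
  have hxy := Submodule.mul_mem_mul hx hy
  rw [wordFiltration, wordFiltration, Submodule.span_mul_span] at hxy
  refine Submodule.span_mono ?_ hxy
  rintro _ ⟨_, ⟨v, hv, rfl⟩, _, ⟨w, hw, rfl⟩, rfl⟩
  exact ⟨v * w, (add_le_add hv hw).trans_eq (FreeMonoid.length_mul v w).symm,
    basisFreeMonoid_mul v w⟩

theorem span_range_ι_pow_le_wordFiltration (k : ℕ) :
    Submodule.span R (Set.range (ι R : X → FreeAlgebra R X)) ^ k ≤ wordFiltration R X k := by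
  induction k with
  | zero => simp [wordFiltration_zero]
  | succ k ih =>
    have hι : Submodule.span R (Set.range (ι R)) ≤ wordFiltration R X 1 :=
      Submodule.span_le.2 (Set.range_subset_iff.2 ι_mem_wordFiltration_one)
    rw [pow_succ, Submodule.mul_le]
    exact fun x hx y hy => mul_mem_wordFiltration (ih hx) (hι hy)

end CommSemiring

variable [CommRing R] (f : FreeAlgebra R X →ₐ[R] FreeAlgebra R X)

theorem map_basisFreeMonoid_sub_mem_wordFiltration
    (hf : ∀ i, f (ι R i) - ι R i ∈ wordFiltration R X 2) (w : FreeMonoid X) :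
    f (basisFreeMonoid R X w) - basisFreeMonoid R X w ∈ wordFiltration R X (w.length + 1) := by
  induction w using FreeMonoid.inductionOn' with
  | one => simp [basisFreeMonoid_apply]
  | of_mul i w ih =>
    set y := basisFreeMonoid R X w
    have hfy : f y ∈ wordFiltration R X w.length := by
      rw [← sub_add_cancel (f y) y]
      exact add_mem (wordFiltration_antitone (Nat.le_succ _) ih)
        (basisFreeMonoid_mem_wordFiltration w)
    have hsplit : f (ι R i * y) - ι R i * y =
        (f (ι R i) - ι R i) * f y + ι R i * (f y - y) := by
      rw [map_mul]
      noncomm_ring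
    have hlength : (FreeMonoid.of i * w).length + 1 = 2 + w.length := by
      rw [FreeMonoid.length_mul, FreeMonoid.length_of]
      omega
    rw [basisFreeMonoid_mul, basisFreeMonoid_of, hsplit, hlength]
    refine add_mem (mul_mem_wordFiltration (hf i) hfy) ?_
    convert mul_mem_wordFiltration (ι_mem_wordFiltration_one i) ih using 2
    omega

theorem map_sub_mem_wordFiltration (hf : ∀ i, f (ι R i) - ι R i ∈ wordFiltration R X 2)
    {d : ℕ} {x : FreeAlgebra R X} (hx : x ∈ wordFiltration R X d) :
    f x - x ∈ wordFiltration R X (d + 1) := by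
  suffices h : wordFiltration R X d ≤
      (wordFiltration R X (d + 1)).comap (f.toLinearMap - LinearMap.id) from h hx
  refine Submodule.span_le.2 ?_
  rintro _ ⟨w, hw, rfl⟩
  exact wordFiltration_antitone (Nat.succ_le_succ hw)
    (map_basisFreeMonoid_sub_mem_wordFiltration f hf w)

-- An eigenvector `x` for `c ≠ 1` lies in every step of the filtration, as `f x - x = (c - 1) • x`.
theorem eigenvalue_eq_one_of_map_ι_sub_mem_wordFiltration [NoZeroDivisors R]
    (hf : ∀ i, f (ι R i) - ι R i ∈ wordFiltration R X 2) {c : R}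
    (hc : Module.End.HasEigenvalue f.toLinearMap c) : c = 1 := by
  obtain ⟨x, hx⟩ := hc.exists_hasEigenvector
  by_contra hc1
  refine hx.2 (eq_zero_of_forall_mem_wordFiltration fun d => ?_)
  induction d with
  | zero => simp [wordFiltration_zero]
  | succ d ih =>
    have hfx : f x - x = (c - 1) • x := by
      rw [sub_smul, one_smul, ← hx.apply_eq_smul, AlgHom.toLinearMap_apply]
    exact mem_wordFiltration_of_smul_mem (sub_ne_zero.2 hc1)
      (hfx ▸ map_sub_mem_wordFiltration f hf ih)

end WordFiltration

theorem higherDegree_le_wordFiltration (K : Type) [Field K] (n : ℕ) :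
    FreeAlgebra.higherDegree K n ≤ wordFiltration K (Fin n) 2 :=
  iSup_le fun k => (span_range_ι_pow_le_wordFiltration _).trans (wordFiltration_antitone k.2)

theorem one_torus_action_unipotent_trivial_general {R X G : Type*} [CommRing R] [IsDomain R]
    [Monoid G] (σ : G →* (FreeAlgebra R X →ₐ[R] FreeAlgebra R X))
    (hreg : ∀ i, IsCharacterSum R fun t => σ t (ι R i))
    (hhd : ∀ t i, σ t (ι R i) - ι R i ∈ wordFiltration R X 2) (t : G) : σ t = 1 :=
  FreeAlgebra.hom_ext <| funext fun i =>
    apply_eq_self_of_isCharacterSum (AlgHom.toEnd.comp σ)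
      (fun s _ => eigenvalue_eq_one_of_map_ι_sub_mem_wordFiltration (σ s) (hhd s)) (hreg i) t

/-- If `K` is infinite and a regular `Kˣ`-action `σ` on the free algebra satisfies that every
`σ(t)(z_i) - z_i` has all of its homogeneous components in degrees `≥ 2`, then `σ` is trivial. -/
theorem one_torus_action_unipotent_trivial
    {K : Type} [Field K] [Infinite K] {n : ℕ} (hn : 1 ≤ n)
    (σ : Kˣ →* (FreeAlgebra K (Fin n) ≃ₐ[K] FreeAlgebra K (Fin n)))
    (hreg : OneTorusActionIsRegular σ)
    (hhd : ∀ (t : Kˣ) (i : Fin n),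
      σ t (ι K i) - ι K i ∈ FreeAlgebra.higherDegree K n) :
    ∀ t : Kˣ, σ t = 1 := by
  intro t
  have hσ := one_torus_action_unipotent_trivial_general ((AlgEquiv.toAlgHomHom K _).comp σ)
    (fun i => (hreg i).elim isCharacterSum_of_eq_sum_zpow_smul)
    (fun s i => higherDegree_le_wordFiltration K n (hhd s i)) t
  exact AlgEquiv.coe_toAlgHom_injective hσ
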